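/- Assume σ1 ≠ τ1. Then the projective curve F = 0 has a unique singular point of the form (x:0:1) if and only if Res_x(h1, h1′) = 0 and Res_x(h1′, h1″) = 0; in that case this unique affine singular point is (ξ:0:1) with ξ = (σ2−τ2)/(3(σ1−τ1)), and Sing = {(0:1:0), (ξ:0:1)} has exactly 2 elements. -/

import Mathlib

open MvPolynomial

/-!
The affine curve is `(y² - φ - ψ)² = 4φψ`. At a singular point with `y ≠ 0` the two sides vanish,
so `x` would be a multiple root of `φψ` at which `φ + ψ = y² ≠ 0`, hence a multiple root of `φ` or
of `ψ`, contradicting separability. The points of the `x`-axis on the curve are all singular; they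
are the `(ξ, 0)` with `φ ξ = ψ ξ`. At infinity only `(0 : 1 : 0)` is singular.

Completing the cube, `ψ - φ = a (x - t)³ + p (x - t) + q`, and this cubic has a single root if and
only if `p = q = 0`. The resultant of its first two derivatives vanishes exactly when `p = 0`, and
then its resultant with its derivative vanishes exactly when `q = 0`.
-/

open scoped Polynomial

section Cubic

variable {R : Type*} [CommRing R]

lemma resultant_three_two_eq_det (f g : R[X]) :
    Polynomial.resultant f g 3 2 = Matrix.det
      !![f.coeff 3, f.coeff 2, f.coeff 1, f.coeff 0, 0;
         0, f.coeff 3, f.coeff 2, f.coeff 1, f.coeff 0;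
         g.coeff 2, g.coeff 1, g.coeff 0, 0, 0;
         0, g.coeff 2, g.coeff 1, g.coeff 0, 0;
         0, 0, g.coeff 2, g.coeff 1, g.coeff 0] := by
  rw [Polynomial.resultant, ← Matrix.det_transpose,
    ← Matrix.det_submatrix_equiv_self Fin.revPerm]
  congr 1
  ext i j
  fin_cases i <;> fin_cases j <;> simp [Polynomial.sylvester, Fin.addCases]

lemma resultant_two_one_eq_det (f g : R[X]) :
    Polynomial.resultant f g 2 1 = Matrix.det
      !![f.coeff 2, f.coeff 1, f.coeff 0;
         g.coeff 1, g.coeff 0, 0;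
         0, g.coeff 1, g.coeff 0] := by
  rw [Polynomial.resultant, ← Matrix.det_transpose,
    ← Matrix.det_submatrix_equiv_self Fin.revPerm]
  congr 1
  ext i j
  fin_cases i <;> fin_cases j <;> simp [Polynomial.sylvester, Fin.addCases]

lemma resultant_C_mul_X_sub_C_pow_eq_zero_iff [IsDomain R] {f : R[X]} {c t : R} {m n : ℕ}
    (hf : f.natDegree ≤ m) (hc : c ≠ 0) (hn : n ≠ 0) :
    f.resultant (.C c * (.X - .C t) ^ n) m n = 0 ↔ f.IsRoot t := by
  simp [Polynomial.resultant_C_mul_right, Polynomial.resultant_X_sub_C_pow_right _ _ _ _ hf, hc, hn]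

lemma eq_C_leadingCoeff_mul_X_sub_C_pow [IsDomain R] {f : R[X]} {t : R} (hf : f.Splits)
    (ht : ∀ x, f.IsRoot x → x = t) :
    f = .C f.leadingCoeff * (.X - .C t) ^ f.natDegree := by
  have hroots : f.roots = Multiset.replicate f.natDegree t :=
    Multiset.eq_replicate.2
      ⟨hf.natDegree_eq_card_roots.symm, fun x hx ↦ ht x (Polynomial.isRoot_of_mem_roots hx)⟩
  conv_lhs => rw [hf.eq_prod_roots, hroots]
  simp

lemma cubic_resultant_derivative_eq_det (P : Cubic R) :
    P.toPoly.resultant P.toPoly.derivative 3 2 = Matrix.det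
      !![P.a, P.b, P.c, P.d, 0;
         0, P.a, P.b, P.c, P.d;
         3 * P.a, 2 * P.b, P.c, 0, 0;
         0, 3 * P.a, 2 * P.b, P.c, 0;
         0, 0, 3 * P.a, 2 * P.b, P.c] := by
  rw [resultant_three_two_eq_det]
  norm_num [Polynomial.coeff_derivative, mul_comm P.a, mul_comm P.b]

lemma cubic_derivative_resultant_derivative_eq_det (P : Cubic R) :
    P.toPoly.derivative.resultant P.toPoly.derivative.derivative 2 1 = Matrix.det
      !![3 * P.a, 2 * P.b, P.c;
         6 * P.a, 2 * P.b, 0;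
         0, 6 * P.a, 2 * P.b] := by
  rw [resultant_two_one_eq_det]
  have h6 : 3 * P.a * 2 = 6 * P.a := by ring
  norm_num [Polynomial.coeff_derivative, mul_comm P.a, mul_comm P.b, h6]

variable {k : Type*} [Field k] {P : Cubic k}

lemma cubic_eq_depressed (h3 : (3 : k) ≠ 0) (ha : P.a ≠ 0) :
    ∃ p q : k, P.toPoly = .C P.a * (.X - .C (-P.b / (3 * P.a))) ^ 3
      + .C p * (.X - .C (-P.b / (3 * P.a))) + .C q := by
  obtain ⟨t, ht⟩ : ∃ t, P.b = -(3 * P.a * t) := ⟨-P.b / (3 * P.a), by field_simp⟩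
  have htdiv : -P.b / (3 * P.a) = t := by rw [ht]; field_simp
  refine ⟨P.c - 3 * P.a * t ^ 2, P.d + P.c * t - 2 * P.a * t ^ 3, ?_⟩
  rw [htdiv, Cubic.toPoly, ht]
  simp only [map_neg, map_sub, map_add, map_mul, map_pow, map_ofNat]
  ring

lemma resultants_eq_zero_iff_of_eq_depressed {f : k[X]} {a p q t : k} (h2 : (2 : k) ≠ 0)
    (h3 : (3 : k) ≠ 0) (ha : a ≠ 0)
    (hf : f = .C a * (.X - .C t) ^ 3 + .C p * (.X - .C t) + .C q) :
    (f.resultant f.derivative 3 2 = 0 ∧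
      f.derivative.resultant f.derivative.derivative 2 1 = 0) ↔ p = 0 ∧ q = 0 := by
  have hdeg : f.natDegree ≤ 3 := by rw [hf]; compute_degree
  have hdeg' : f.derivative.natDegree ≤ 2 :=
    (Polynomial.natDegree_derivative_le f).trans (Nat.sub_le_sub_right hdeg 1)
  have hderiv : f.derivative = .C (a * 3) * (.X - .C t) ^ 2 + .C p := by
    simp [hf, Polynomial.derivative_X_sub_C_pow, mul_assoc]
  have hderiv₂ : f.derivative.derivative = .C (a * 3 * 2) * (.X - .C t) ^ 1 := by
    simp [hderiv, Polynomial.derivative_X_sub_C_pow, mul_assoc]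
  have h3a : a * 3 ≠ 0 := mul_ne_zero ha h3
  have hres₂ : f.derivative.resultant f.derivative.derivative 2 1 = 0 ↔ p = 0 := by
    rw [hderiv₂, resultant_C_mul_X_sub_C_pow_eq_zero_iff hdeg' (mul_ne_zero h3a h2) one_ne_zero,
      hderiv]
    simp
  have hres₁ (hp : p = 0) : f.resultant f.derivative 3 2 = 0 ↔ q = 0 := by
    rw [hderiv, hp, map_zero, add_zero,
      resultant_C_mul_X_sub_C_pow_eq_zero_iff hdeg h3a two_ne_zero, hf]
    simp
  rw [hres₂, and_comm]
  exact and_congr_right hres₁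

lemma cubic_isRoot_iff_of_resultants_eq_zero (h2 : (2 : k) ≠ 0) (h3 : (3 : k) ≠ 0)
    (ha : P.a ≠ 0) (hres₁ : P.toPoly.resultant P.toPoly.derivative 3 2 = 0)
    (hres₂ : P.toPoly.derivative.resultant P.toPoly.derivative.derivative 2 1 = 0) {x : k} :
    P.toPoly.IsRoot x ↔ x = -P.b / (3 * P.a) := by
  obtain ⟨p, q, hP⟩ := cubic_eq_depressed h3 ha
  obtain ⟨rfl, rfl⟩ := (resultants_eq_zero_iff_of_eq_depressed h2 h3 ha hP).1 ⟨hres₁, hres₂⟩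
  rw [hP]
  simp [ha, sub_eq_zero]

lemma cubic_existsUnique_isRoot_iff_resultants_eq_zero [IsAlgClosed k] (h2 : (2 : k) ≠ 0)
    (h3 : (3 : k) ≠ 0) (ha : P.a ≠ 0) :
    (∃! x, P.toPoly.IsRoot x) ↔ P.toPoly.resultant P.toPoly.derivative 3 2 = 0 ∧
      P.toPoly.derivative.resultant P.toPoly.derivative.derivative 2 1 = 0 := by
  constructor
  · rintro ⟨t, -, ht⟩
    have hP := eq_C_leadingCoeff_mul_X_sub_C_pow (IsAlgClosed.splits P.toPoly) ht
    rw [Cubic.leadingCoeff_of_a_ne_zero ha, Cubic.natDegree_of_a_ne_zero ha] at hP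
    exact (resultants_eq_zero_iff_of_eq_depressed h2 h3 ha (p := 0) (q := 0) (by simpa using hP)).2
      ⟨rfl, rfl⟩
  · rintro ⟨hres₁, hres₂⟩
    simp only [cubic_isRoot_iff_of_resultants_eq_zero h2 h3 ha hres₁ hres₂, existsUnique_eq]

end Cubic

section Singular

/-- A zero of `F` at which all partial derivatives of `F` vanish: a singular point of the affine
hypersurface `F = 0`, or of the cone over a projective hypersurface when `F` is homogeneous. -/
def IsSingularAt {σ R : Type*} [CommSemiring R] (F : MvPolynomial σ R) (v : σ → R) : Prop :=
  eval v F = 0 ∧ ∀ i, eval v (pderiv i F) = 0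

/-- The singular points of the projective hypersurface `F = 0`, for a homogeneous `F`; by
`mk_mem_singularLocus_iff` the choice of representative is immaterial. -/
def singularLocus {σ k : Type*} [Field k] (F : MvPolynomial σ k) :
    Set (Projectivization k (σ → k)) :=
  {P | IsSingularAt F P.rep}

/-- Setting the last variable equal to `1`, i.e. passing to an affine chart. -/
noncomputable def dehomogenize {R : Type*} [CommSemiring R] {n : ℕ} :
    MvPolynomial (Fin (n + 1)) R →ₐ[R] MvPolynomial (Fin n) R :=
  aeval (Fin.snoc (α := fun _ ↦ MvPolynomial (Fin n) R) X 1)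

section CommSemiring

variable {σ R : Type*} [CommSemiring R] {F : MvPolynomial σ R} {d n : ℕ}

lemma eval_smul_of_isHomogeneous (hF : F.IsHomogeneous d) (c : R) (v : σ → R) :
    eval (c • v) F = c ^ d * eval v F := by
  rw [eval_eq, eval_eq, Finset.mul_sum]
  refine Finset.sum_congr rfl fun m hm ↦ ?_
  have hdeg : ∑ i ∈ m.support, m i = d := by
    rw [← hF (mem_support_iff.1 hm), Finsupp.weight_apply]
    simp [Finsupp.sum]
  simp only [Pi.smul_apply, smul_eq_mul, mul_pow, Finset.prod_mul_distrib,
    Finset.prod_pow_eq_pow_sum, hdeg]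
  ring

lemma dehomogenize_fin_three (F : MvPolynomial (Fin 3) R) :
    dehomogenize F = aeval ![X 0, X 1, 1] F := by
  rw [dehomogenize]
  congr 2
  ext i : 1
  fin_cases i <;> rfl

lemma eval_dehomogenize (F : MvPolynomial (Fin (n + 1)) R) (v : Fin n → R) :
    eval v (dehomogenize F) = eval (Fin.snoc v 1 : Fin (n + 1) → R) F := by
  have hcomp : (eval v).comp (dehomogenize (R := R) (n := n)).toRingHom =
      eval (Fin.snoc v 1 : Fin (n + 1) → R) := by
    ext i
    · simp
    · cases i using Fin.lastCases <;> simp [dehomogenize]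
  exact RingHom.congr_fun hcomp F

lemma pderiv_dehomogenize (i : Fin n) (F : MvPolynomial (Fin (n + 1)) R) :
    pderiv i (dehomogenize F) = dehomogenize (pderiv i.castSucc F) := by
  induction F using MvPolynomial.induction_on with
  | C a => simp [dehomogenize]
  | add p q hp hq => simp [hp, hq]
  | mul_X p j hp =>
    have hX : pderiv i (dehomogenize (X j : MvPolynomial (Fin (n + 1)) R)) =
        dehomogenize (pderiv i.castSucc (X j)) := by
      cases j using Fin.lastCases with
      | last => simp [dehomogenize, pderiv_X_of_ne (Fin.castSucc_ne_last i).symm]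
      | cast j => simp [dehomogenize, pderiv_X, Pi.single_apply]
    simp only [map_mul, pderiv_mul, map_add, hp, hX]

lemma isSingularAt_smul_iff [NoZeroDivisors R] (hF : F.IsHomogeneous d) {c : R}
    (hc : c ≠ 0) {v : σ → R} : IsSingularAt F (c • v) ↔ IsSingularAt F v := by
  simp [IsSingularAt, eval_smul_of_isHomogeneous hF, eval_smul_of_isHomogeneous hF.pderiv,
    pow_ne_zero _ hc]

lemma pderiv_rename_of_notMem_range {τ : Type*} {f : σ → τ} {i : τ}
    (hi : i ∉ Set.range f) (p : MvPolynomial σ R) : pderiv i (rename f p) = 0 := by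
  classical
  refine pderiv_eq_zero_of_notMem_vars fun hmem ↦ hi ?_
  obtain ⟨j, -, hj⟩ := Finset.mem_image.1 (vars_rename f p hmem)
  exact ⟨j, hj⟩

lemma eval_zero_of_isHomogeneous (hF : F.IsHomogeneous d) (hd : d ≠ 0) : eval 0 F = 0 := by
  rw [eval_zero, constantCoeff_eq]
  exact hF.coeff_eq_zero (by simpa using hd.symm)

lemma isSingularAt_rename {τ : Type*} (hF : F.IsHomogeneous d) (hd : 2 ≤ d) {f : σ → τ}
    (hf : f.Injective) {v : τ → R} (hv : v ∘ f = 0) : IsSingularAt (rename f F) v := by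
  constructor
  · rw [eval_rename, hv, eval_zero_of_isHomogeneous hF (by lia)]
  · intro i
    by_cases hi : i ∈ Set.range f
    · obtain ⟨j, rfl⟩ := hi
      rw [pderiv_rename hf, eval_rename, hv, eval_zero_of_isHomogeneous hF.pderiv (by lia)]
    · rw [pderiv_rename_of_notMem_range hi, map_zero]

-- Euler's identity expresses the missing partial derivative through `F` and the other ones.
lemma isSingularAt_snoc_one_iff {F : MvPolynomial (Fin (n + 1)) R} (hF : F.IsHomogeneous d)
    (v : Fin n → R) :
    IsSingularAt F (Fin.snoc v 1 : Fin (n + 1) → R) ↔ IsSingularAt (dehomogenize F) v := by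
  have heuler := congrArg (eval (Fin.snoc v 1 : Fin (n + 1) → R)) hF.sum_X_mul_pderiv
  simp only [IsSingularAt, pderiv_dehomogenize, eval_dehomogenize, Fin.forall_fin_succ']
  refine and_congr_right fun hzero ↦ and_iff_left_of_imp fun hcast ↦ ?_
  simpa [Fin.sum_univ_castSucc, hzero, hcast] using heuler

end CommSemiring

section Field

variable {σ k : Type*} [Field k] {d n : ℕ}

lemma mem_singularLocus_fin_three (F : MvPolynomial (Fin 3) k)
    (P : Projectivization k (Fin 3 → k)) :
    P ∈ singularLocus F ↔ eval P.rep F = 0 ∧ eval P.rep (pderiv 0 F) = 0 ∧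
      eval P.rep (pderiv 1 F) = 0 ∧ eval P.rep (pderiv 2 F) = 0 := by
  simp [singularLocus, IsSingularAt, Fin.forall_fin_succ]

lemma mk_mem_singularLocus_iff {F : MvPolynomial σ k} (hF : F.IsHomogeneous d)
    {v : σ → k} (hv : v ≠ 0) :
    Projectivization.mk k v hv ∈ singularLocus F ↔ IsSingularAt F v := by
  obtain ⟨c, hc⟩ := Projectivization.exists_smul_eq_mk_rep k v hv
  rw [singularLocus, Set.mem_ofPred_eq, ← hc]
  exact isSingularAt_smul_iff hF c.ne_zero

lemma eq_of_dehomogenize_eq [Infinite k] {F G : MvPolynomial (Fin (n + 1)) k}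
    (hF : F.IsHomogeneous d) (hG : G.IsHomogeneous d) (h : dehomogenize F = dehomogenize G) :
    F = G := by
  refine mul_left_cancel₀ (X_ne_zero (Fin.last n)) (MvPolynomial.funext fun v ↦ ?_)
  obtain hlast | hlast := eq_or_ne (v (Fin.last n)) 0
  · simp [hlast]
  have hv : v = v (Fin.last n) •
      (Fin.snoc (fun i ↦ v i.castSucc / v (Fin.last n)) 1 : Fin (n + 1) → k) := by
    ext i
    cases i using Fin.lastCases <;> simp [mul_div_cancel₀, hlast]
  rw [map_mul, map_mul, hv, eval_smul_of_isHomogeneous hF, eval_smul_of_isHomogeneous hG,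
    ← eval_dehomogenize, ← eval_dehomogenize, h]

end Field

end Singular

section SqrtSum

variable {k : Type*} [Field k] {φ ψ : k[X]}

/-- The polynomial `y ^ 4 - 2 (φ + ψ) y ^ 2 + (φ - ψ) ^ 2` in `x, y`, i.e. the product of the four
factors `y ± √φ ± √ψ`; it defines the affine curve under study. -/
noncomputable def sqrtSumPoly (φ ψ : k[X]) : MvPolynomial (Fin 2) k :=
  X 1 ^ 4 - C 2 * (Polynomial.aeval (X 0) φ + Polynomial.aeval (X 0) ψ) * X 1 ^ 2
    + (Polynomial.aeval (X 0) φ - Polynomial.aeval (X 0) ψ) ^ 2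

/-- The sextic form dehomogenizing to `sqrtSumPoly φ ψ` when `φ`, `ψ` have degree at most `4` and
`φ - ψ` has degree at most `3`. -/
noncomputable def sqrtSumForm (φ ψ : k[X]) : MvPolynomial (Fin 3) k :=
  X 1 ^ 4 * X 2 ^ 2 - C 2 * rename ![0, 2] ((φ + ψ).homogenize 4) * X 1 ^ 2
    + rename ![0, 2] ((φ - ψ).homogenize 3) ^ 2

lemma eval_aeval_X {σ R : Type*} [CommSemiring R] (v : σ → R) (i : σ) (f : R[X]) :
    eval v (Polynomial.aeval (X i) f) = f.eval (v i) := by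
  rw [Polynomial.aeval_def, Polynomial.hom_eval₂, eval_X]
  congr 1
  ext
  simp

lemma eval_sqrtSumPoly (φ ψ : k[X]) (x y : k) :
    eval ![x, y] (sqrtSumPoly φ ψ) =
      (y ^ 2 - φ.eval x - ψ.eval x) ^ 2 - 4 * (φ.eval x * ψ.eval x) := by
  simp only [sqrtSumPoly, map_add, map_sub, map_mul, map_pow, eval_X, eval_C, eval_aeval_X,
    Matrix.cons_val]
  ring

lemma eval_pderiv_zero_sqrtSumPoly (φ ψ : k[X]) (x y : k) :
    eval ![x, y] (pderiv 0 (sqrtSumPoly φ ψ)) =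
      -2 * (y ^ 2 - φ.eval x - ψ.eval x) * (φ.derivative.eval x + ψ.derivative.eval x)
        - 4 * (φ.derivative.eval x * ψ.eval x + φ.eval x * ψ.derivative.eval x) := by
  simp only [sqrtSumPoly, map_add, map_sub, Derivation.leibniz, Derivation.leibniz_pow,
    Derivation.map_aeval, pderiv_X, pderiv_C, Pi.single_eq_same, Pi.single_eq_of_ne one_ne_zero,
    smul_eq_mul, nsmul_eq_mul]
  simp only [map_add, map_sub, map_mul, map_pow, map_zero, map_one, map_ofNat, Nat.cast_ofNat,
    eval_X, eval_aeval_X, Matrix.cons_val]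
  ring

lemma eval_pderiv_one_sqrtSumPoly (φ ψ : k[X]) (x y : k) :
    eval ![x, y] (pderiv 1 (sqrtSumPoly φ ψ)) = 4 * y * (y ^ 2 - φ.eval x - ψ.eval x) := by
  simp only [sqrtSumPoly, map_add, map_sub, Derivation.leibniz, Derivation.leibniz_pow,
    Derivation.map_aeval, pderiv_X, pderiv_C, Pi.single_eq_same, Pi.single_eq_of_ne zero_ne_one,
    smul_eq_mul, nsmul_eq_mul]
  simp only [map_add, map_sub, map_mul, map_pow, map_zero, map_one, map_ofNat, Nat.cast_ofNat,
    eval_X, eval_aeval_X, Matrix.cons_val]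
  ring

lemma derivative_eval_ne_zero_of_separable {f : k[X]} (hf : f.Separable) {x : k}
    (hx : f.eval x = 0) : f.derivative.eval x ≠ 0 := by
  simpa using hf.eval₂_derivative_ne_zero (RingHom.id k) hx

lemma isSingularAt_sqrtSumPoly_iff (h2 : (2 : k) ≠ 0) (hφ : φ.Separable) (hψ : ψ.Separable)
    {x y : k} :
    IsSingularAt (sqrtSumPoly φ ψ) ![x, y] ↔ y = 0 ∧ φ.eval x = ψ.eval x := by
  have h4 : (4 : k) ≠ 0 := by simpa [show (4 : k) = 2 * 2 by norm_num] using h2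
  simp only [IsSingularAt, Fin.forall_fin_two, eval_sqrtSumPoly, eval_pderiv_zero_sqrtSumPoly,
    eval_pderiv_one_sqrtSumPoly]
  constructor
  · rintro ⟨hzero, hx, hy⟩
    obtain rfl | hy0 := eq_or_ne y 0
    · refine ⟨rfl, sub_eq_zero.1 (pow_eq_zero_iff two_ne_zero |>.1 ?_)⟩
      linear_combination hzero
    have hsum : y ^ 2 - φ.eval x - ψ.eval x = 0 := by simpa [h4, hy0] using hy
    have hprod : φ.eval x * ψ.eval x = 0 := by simpa [hsum, h4] using hzero
    have hderiv : φ.derivative.eval x * ψ.eval x + φ.eval x * ψ.derivative.eval x = 0 := by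
      simpa [hsum, h4] using hx
    exfalso
    obtain hφx | hψx := mul_eq_zero.1 hprod
    · have hψx : ψ.eval x ≠ 0 := fun h ↦ hy0 (by simpa [hφx, h] using hsum)
      simp [hφx, hψx, derivative_eval_ne_zero_of_separable hφ hφx] at hderiv
    · have hφx : φ.eval x ≠ 0 := fun h ↦ hy0 (by simpa [hψx, h] using hsum)
      simp [hφx, hψx, derivative_eval_ne_zero_of_separable hψ hψx] at hderiv
  · rintro ⟨rfl, h⟩
    simp only [h]
    refine ⟨?_, ?_, ?_⟩ <;> ring

lemma isHomogeneous_sqrtSumForm (φ ψ : k[X]) : (sqrtSumForm φ ψ).IsHomogeneous 6 := by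
  have hform (f : k[X]) (n : ℕ) : (rename ![0, 2] (f.homogenize n) :
      MvPolynomial (Fin 3) k).IsHomogeneous n :=
    f.isHomogeneous_homogenize.rename_isHomogeneous
  exact (((isHomogeneous_X_pow 1 4).mul (isHomogeneous_X_pow 2 2)).sub
    (((hform _ 4).C_mul 2).mul (isHomogeneous_X_pow 1 2))).add ((hform _ 3).pow 2)

lemma dehomogenize_sqrtSumForm (hadd : (φ + ψ).natDegree ≤ 4) (hsub : (φ - ψ).natDegree ≤ 3) :
    dehomogenize (sqrtSumForm φ ψ) = sqrtSumPoly φ ψ := by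
  have hform {f : k[X]} {n : ℕ} (hf : f.natDegree ≤ n) :
      dehomogenize (rename ![0, 2] (f.homogenize n) : MvPolynomial (Fin 3) k) =
        Polynomial.aeval (X 0) f := by
    rw [dehomogenize, aeval_rename, Polynomial.aeval_homogenize_of_eq_one hf] <;> rfl
  have hX : dehomogenize (X 1 : MvPolynomial (Fin 3) k) = X 1 ∧
      dehomogenize (X 2 : MvPolynomial (Fin 3) k) = 1 := by
    simp only [dehomogenize, aeval_X]
    exact ⟨rfl, rfl⟩
  have hC : dehomogenize (C 2 : MvPolynomial (Fin 3) k) = C 2 := AlgHom.commutes _ _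
  rw [sqrtSumForm, sqrtSumPoly, ← map_add (Polynomial.aeval _), ← map_sub (Polynomial.aeval _),
    ← hform hadd, ← hform hsub]
  simp only [map_add dehomogenize, map_sub, map_mul, map_pow, hX, hC, one_pow, mul_one]

lemma eval_homogenize_at_infinity (f : k[X]) (n : ℕ) (x : k) :
    eval ![x, 0] (f.homogenize n) = f.coeff n * x ^ n := by
  rw [Polynomial.homogenize, map_sum, Finset.sum_eq_single (n, 0)]
  · simp [eval_monomial, Finsupp.prod_fintype]
  · rintro ⟨i, j⟩ hij hne
    have hj : j ≠ 0 := by rintro rfl; simp_all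
    simp [eval_monomial, Finsupp.prod_fintype, hj]
  · simp

lemma eq_zero_of_isSingularAt_sqrtSumForm (h2 : (2 : k) ≠ 0) (hsub : (φ - ψ).coeff 3 ≠ 0)
    {x y : k} (h : IsSingularAt (sqrtSumForm φ ψ) ![x, y, 0]) : x = 0 := by
  have hform (f : k[X]) (n : ℕ) :
      eval ![x, y, 0] (rename ![0, 2] (f.homogenize n)) = f.coeff n * x ^ n := by
    rw [eval_rename, ← eval_homogenize_at_infinity]
    congr 2
    ext i
    fin_cases i <;> rfl
  have hpderiv (f : k[X]) (n : ℕ) :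
      pderiv 1 (rename ![0, 2] (f.homogenize n) : MvPolynomial (Fin 3) k) = 0 :=
    pderiv_rename_of_notMem_range (by simp) _
  have hzero : (φ - ψ).coeff 3 ^ 2 * x ^ 6 = 2 * (φ + ψ).coeff 4 * x ^ 4 * y ^ 2 := by
    have hF := h.1
    simp only [sqrtSumForm, map_add (eval _), map_sub (eval _), map_mul (eval _), map_pow, hform,
      eval_X, eval_C, Matrix.cons_val] at hF
    linear_combination hF
  have hy : ((φ + ψ).coeff 4 = 0 ∨ x = 0) ∨ y = 0 := by
    simpa [-Polynomial.homogenize_add, -Polynomial.coeff_add, sqrtSumForm, hpderiv, hform, h2]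
      using h.2 1
  have hx : (φ - ψ).coeff 3 ^ 2 * x ^ 6 = 0 := by
    rw [hzero]
    obtain (h | h) | h := hy <;> simp [h]
  simpa only [mul_eq_zero, pow_eq_zero_iff, hsub, ne_eq, OfNat.ofNat_ne_zero, not_false_eq_true,
    false_or] using hx

lemma isSingularAt_sqrtSumForm_yAxis (φ ψ : k[X]) :
    IsSingularAt (sqrtSumForm φ ψ) ![0, 1, 0] := by
  have hinj : Function.Injective (![0, 2] : Fin 2 → Fin 3) := by decide
  have hv : (![0, 1, 0] : Fin 3 → k) ∘ ![0, 2] = 0 := by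
    ext i
    fin_cases i <;> rfl
  obtain ⟨hA, hA'⟩ :=
    isSingularAt_rename ((φ + ψ).isHomogeneous_homogenize (n := 4)) (by norm_num) hinj hv
  obtain ⟨hB, -⟩ :=
    isSingularAt_rename ((φ - ψ).isHomogeneous_homogenize (n := 3)) (by norm_num) hinj hv
  simp [-Polynomial.homogenize_add, -Polynomial.homogenize_sub, IsSingularAt, sqrtSumForm, hA, hA',
    hB]

end SqrtSum

section SingularLocus

/-- The point `(ξ : 0 : 1)`. -/
def xAxisPoint {k : Type*} [Field k] (ξ : k) : Projectivization k (Fin 3 → k) :=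
  Projectivization.mk k (![ξ, 0, 1] : Fin 3 → k) (by intro hc; simpa using congrFun hc 2)

/-- The point `(0 : 1 : 0)` at infinity of the `y`-axis. -/
def yAxisInfinity (k : Type*) [Field k] : Projectivization k (Fin 3 → k) :=
  Projectivization.mk k (![0, 1, 0] : Fin 3 → k) (by intro hc; simpa using congrFun hc 1)

variable {k : Type*} [Field k] {φ ψ : k[X]} {F : MvPolynomial (Fin 3) k}

lemma xAxisPoint_ne_yAxisInfinity (ξ : k) : xAxisPoint ξ ≠ yAxisInfinity k := by
  intro h
  obtain ⟨c, hc⟩ := (Projectivization.mk_eq_mk_iff' _ _ _ _ _).1 h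
  simpa using congrFun hc 2

lemma isSingularAt_affine_iff (h2 : (2 : k) ≠ 0) (hφ : φ.Separable) (hψ : ψ.Separable)
    (hF : F.IsHomogeneous 6) (hFf : dehomogenize F = sqrtSumPoly φ ψ) {x y : k} :
    IsSingularAt F ![x, y, 1] ↔ y = 0 ∧ φ.eval x = ψ.eval x := by
  have hsnoc : ![x, y, 1] = (Fin.snoc ![x, y] 1 : Fin 3 → k) := by
    ext i
    fin_cases i <;> rfl
  rw [hsnoc, isSingularAt_snoc_one_iff hF, hFf, isSingularAt_sqrtSumPoly_iff h2 hφ hψ]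

lemma xAxisPoint_mem_singularLocus_iff (h2 : (2 : k) ≠ 0) (hφ : φ.Separable) (hψ : ψ.Separable)
    (hF : F.IsHomogeneous 6) (hFf : dehomogenize F = sqrtSumPoly φ ψ) {x : k} :
    xAxisPoint x ∈ singularLocus F ↔ φ.eval x = ψ.eval x := by
  rw [xAxisPoint, mk_mem_singularLocus_iff hF, isSingularAt_affine_iff h2 hφ hψ hF hFf,
    and_iff_right rfl]

lemma singularLocus_eq [Infinite k] (h2 : (2 : k) ≠ 0) (hφ : φ.Separable) (hψ : ψ.Separable)
    (hadd : (φ + ψ).natDegree ≤ 4) (hsub : (φ - ψ).natDegree = 3)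
    (hF : F.IsHomogeneous 6) (hFf : dehomogenize F = sqrtSumPoly φ ψ) :
    singularLocus F = insert (yAxisInfinity k) (xAxisPoint '' {x | φ.eval x = ψ.eval x}) := by
  have hFform : F = sqrtSumForm φ ψ :=
    eq_of_dehomogenize_eq hF (isHomogeneous_sqrtSumForm φ ψ)
      (hFf.trans (dehomogenize_sqrtSumForm hadd hsub.le).symm)
  have hcoeff : (φ - ψ).coeff 3 ≠ 0 :=
    Polynomial.coeff_ne_zero_of_eq_degree
      ((Polynomial.degree_eq_iff_natDegree_eq_of_pos three_pos).2 hsub)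
  refine Set.Subset.antisymm (fun P hP ↦ ?_) (Set.insert_subset ?_ (Set.image_subset_iff.2 ?_))
  · induction P using Projectivization.ind with | h v hv => ?_
    rw [mk_mem_singularLocus_iff hF] at hP
    obtain hz | hz := eq_or_ne (v 2) 0
    · have hvec : v = ![v 0, v 1, 0] := by
        ext i
        fin_cases i <;> simp [hz]
      rw [hvec, hFform] at hP
      have hx : v 0 = 0 := eq_zero_of_isSingularAt_sqrtSumForm h2 hcoeff hP
      refine .inl ((Projectivization.mk_eq_mk_iff' _ _ _ _ _).2 ⟨v 1, ?_⟩)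
      ext i
      fin_cases i <;> simp [hz, hx]
    · have hvec : v = v 2 • ![v 0 / v 2, v 1 / v 2, 1] := by
        ext i
        fin_cases i <;> simp [mul_div_cancel₀, hz]
      rw [hvec, isSingularAt_smul_iff hF hz, isSingularAt_affine_iff h2 hφ hψ hF hFf] at hP
      refine .inr ⟨v 0 / v 2, hP.2, (Projectivization.mk_eq_mk_iff' _ _ _ _ _).2 ⟨(v 2)⁻¹, ?_⟩⟩
      rw [hvec, hP.1]
      simp [hz]
  · rw [yAxisInfinity, mk_mem_singularLocus_iff hF, hFform]
    exact isSingularAt_sqrtSumForm_yAxis φ ψ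
  · exact fun x hx ↦ (xAxisPoint_mem_singularLocus_iff h2 hφ hψ hF hFf).2 hx

end SingularLocus

lemma two_ne_zero_and_three_ne_zero_of_charP (k : Type*) [Field k] (p : ℕ) [CharP k p]
    (hp : p = 0 ∨ 5 ≤ p) : (2 : k) ≠ 0 ∧ (3 : k) ≠ 0 := by
  have hcast {n : ℕ} (hn : n ≠ 0) (hn5 : n < 5) : (n : k) ≠ 0 := by
    rw [Ne, CharP.cast_eq_zero_iff k p]
    obtain rfl | hp := hp
    · simpa using hn
    · exact fun hdvd ↦ by have := Nat.le_of_dvd (by lia) hdvd; lia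
  exact ⟨mod_cast hcast two_ne_zero (by norm_num), mod_cast hcast three_ne_zero (by norm_num)⟩

theorem stmt_14_general {k : Type*} [Field k] [IsAlgClosed k] (h2 : (2 : k) ≠ 0)
    (h3 : (3 : k) ≠ 0) {φ ψ : k[X]} (hφ : φ.Separable) (hψ : ψ.Separable) (hdeg : φ.natDegree ≤ 4)
    {P : Cubic k} (hP : P.toPoly = ψ - φ) (ha : P.a ≠ 0) {F : MvPolynomial (Fin 3) k}
    (hF : F.IsHomogeneous 6) (hFf : dehomogenize F = sqrtSumPoly φ ψ) :
    ((∃! ξ, xAxisPoint ξ ∈ singularLocus F) ↔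
      P.toPoly.resultant P.toPoly.derivative 3 2 = 0 ∧
        P.toPoly.derivative.resultant P.toPoly.derivative.derivative 2 1 = 0) ∧
    (P.toPoly.resultant P.toPoly.derivative 3 2 = 0 →
      P.toPoly.derivative.resultant P.toPoly.derivative.derivative 2 1 = 0 →
      (∀ ξ, xAxisPoint ξ ∈ singularLocus F ↔ ξ = -P.b / (3 * P.a)) ∧
      singularLocus F = {yAxisInfinity k, xAxisPoint (-P.b / (3 * P.a))} ∧
      (singularLocus F).ncard = 2) := by
  have hroot (ξ : k) : φ.eval ξ = ψ.eval ξ ↔ P.toPoly.IsRoot ξ := by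
    rw [hP, Polynomial.IsRoot, Polynomial.eval_sub, sub_eq_zero, eq_comm]
  have hmem (ξ : k) : xAxisPoint ξ ∈ singularLocus F ↔ P.toPoly.IsRoot ξ :=
    (xAxisPoint_mem_singularLocus_iff h2 hφ hψ hF hFf).trans (hroot ξ)
  refine ⟨by simpa only [hmem] using cubic_existsUnique_isRoot_iff_resultants_eq_zero h2 h3 ha,
    fun hres₁ hres₂ ↦ ?_⟩
  have hroot_iff (ξ : k) := cubic_isRoot_iff_of_resultants_eq_zero h2 h3 ha hres₁ hres₂ (x := ξ)
  have hsub : (φ - ψ).natDegree = 3 := by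
    rw [← neg_sub, ← hP, Polynomial.natDegree_neg, Cubic.natDegree_of_a_ne_zero ha]
  have hadd : (φ + ψ).natDegree ≤ 4 := by
    rw [show φ + ψ = .C 2 * φ - (φ - ψ) by rw [map_ofNat]; ring]
    exact (Polynomial.natDegree_sub_le _ _).trans
      (max_le ((Polynomial.natDegree_C_mul_le _ _).trans hdeg) (hsub.le.trans (by norm_num)))
  have hSing : singularLocus F = {yAxisInfinity k, xAxisPoint (-P.b / (3 * P.a))} := by
    rw [singularLocus_eq h2 hφ hψ hadd hsub hF hFf]
    simp only [hroot, hroot_iff, Set.ofPred_eq_eq_singleton, Set.image_singleton]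
  exact ⟨fun ξ ↦ (hmem ξ).trans (hroot_iff ξ), hSing,
    hSing ▸ Set.ncard_pair (xAxisPoint_ne_yAxisInfinity _).symm⟩

/-- Case (I-3): for σ1 ≠ τ1, the curve F = 0 has a unique singular point of
the form (x:0:1) iff Res_x(h1, h1') = 0 and Res_x(h1', h1'') = 0; in that case
the unique such point is (ξ:0:1) with ξ = (σ2-τ2)/(3(σ1-τ1)), and
Sing = {(0:1:0), (ξ:0:1)} has exactly 2 elements. -/
theorem stmt_14
    {k : Type*} [Field k] [IsAlgClosed k]
    (p : ℕ) [CharP k p] (hp : p = 0 ∨ 5 ≤ p)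
    (α1 α2 α3 α4 β1 β2 β3 β4 : k)
    (hdist : ([α1, α2, α3, α4, β1, β2, β3, β4] : List k).Pairwise (· ≠ ·))
    (σ1 σ2 σ3 σ4 τ1 τ2 τ3 τ4 : k)
    (hσ1 : σ1 = α1 + α2 + α3 + α4)
    (hσ2 : σ2 = α1 * α2 + α1 * α3 + α1 * α4 + α2 * α3 + α2 * α4 + α3 * α4)
    (hσ3 : σ3 = α1 * α2 * α3 + α1 * α2 * α4 + α1 * α3 * α4 + α2 * α3 * α4)
    (hσ4 : σ4 = α1 * α2 * α3 * α4)
    (hτ1 : τ1 = β1 + β2 + β3 + β4)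
    (hτ2 : τ2 = β1 * β2 + β1 * β3 + β1 * β4 + β2 * β3 + β2 * β4 + β3 * β4)
    (hτ3 : τ3 = β1 * β2 * β3 + β1 * β2 * β4 + β1 * β3 * β4 + β2 * β3 * β4)
    (hτ4 : τ4 = β1 * β2 * β3 * β4)
    (φ1 φ2 f : MvPolynomial (Fin 2) k)
    (hφ1 : φ1 = (X 0 - C α1) * (X 0 - C α2) * (X 0 - C α3) * (X 0 - C α4))
    (hφ2 : φ2 = (X 0 - C β1) * (X 0 - C β2) * (X 0 - C β3) * (X 0 - C β4))
    (hf : f = X 1 ^ 4 - C 2 * (φ1 + φ2) * X 1 ^ 2 + (φ1 - φ2) ^ 2)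
    (F : MvPolynomial (Fin 3) k)
    (hFhom : F.IsHomogeneous 6)
    (hFf : aeval ![(X 0 : MvPolynomial (Fin 2) k), X 1, 1] F = f)
    (Sing : Set (Projectivization k (Fin 3 → k)))
    (hSing : ∀ P : Projectivization k (Fin 3 → k),
      P ∈ Sing ↔ (eval P.rep F = 0 ∧
        eval P.rep (pderiv 0 F) = 0 ∧
        eval P.rep (pderiv 1 F) = 0 ∧
        eval P.rep (pderiv 2 F) = 0))
    (h1 : k → k)
    (hh1 : ∀ x : k, h1 x = (σ1 - τ1) * x ^ 3 - (σ2 - τ2) * x ^ 2 + (σ3 - τ3) * x - (σ4 - τ4))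
    -- res1 = Res_x(h1, h1'), the determinant of the Sylvester matrix of the
    -- cubic h1 and its derivative h1'
    (res1 : k)
    (hres1 : res1 = Matrix.det
      !![σ1 - τ1, -(σ2 - τ2), σ3 - τ3, -(σ4 - τ4), 0;
         0, σ1 - τ1, -(σ2 - τ2), σ3 - τ3, -(σ4 - τ4);
         3 * (σ1 - τ1), -2 * (σ2 - τ2), σ3 - τ3, 0, 0;
         0, 3 * (σ1 - τ1), -2 * (σ2 - τ2), σ3 - τ3, 0;
         0, 0, 3 * (σ1 - τ1), -2 * (σ2 - τ2), σ3 - τ3])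
    -- res2 = Res_x(h1', h1''), the determinant of the Sylvester matrix of the
    -- quadratic h1' and the linear h1''
    (res2 : k)
    (hres2 : res2 = Matrix.det
      !![3 * (σ1 - τ1), -2 * (σ2 - τ2), σ3 - τ3;
         6 * (σ1 - τ1), -2 * (σ2 - τ2), 0;
         0, 6 * (σ1 - τ1), -2 * (σ2 - τ2)])
    (hστ : σ1 ≠ τ1) :
    ((∃! ξ : k, Projectivization.mk k (![ξ, 0, 1] : Fin 3 → k)
        (by intro hc; simpa using congrFun hc 2) ∈ Sing)
      ↔ (res1 = 0 ∧ res2 = 0))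
    ∧ (res1 = 0 → res2 = 0 →
        (∀ ξ : k, Projectivization.mk k (![ξ, 0, 1] : Fin 3 → k)
            (by intro hc; simpa using congrFun hc 2) ∈ Sing
          ↔ ξ = (σ2 - τ2) / (3 * (σ1 - τ1)))
        ∧ Sing = {Projectivization.mk k (![0, 1, 0] : Fin 3 → k)
                    (by intro hc; simpa using congrFun hc 1),
                  Projectivization.mk k
                    (![(σ2 - τ2) / (3 * (σ1 - τ1)), 0, 1] : Fin 3 → k)
                    (by intro hc; simpa using congrFun hc 2)}
        ∧ Sing.ncard = 2) := by
  obtain ⟨h2, h3⟩ := two_ne_zero_and_three_ne_zero_of_charP k p hp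
  obtain ⟨φ, hφ⟩ : ∃ φ : k[X], φ = Lagrange.nodal Finset.univ ![α1, α2, α3, α4] := ⟨_, rfl⟩
  obtain ⟨ψ, hψ⟩ : ∃ ψ : k[X], ψ = Lagrange.nodal Finset.univ ![β1, β2, β3, β4] := ⟨_, rfl⟩
  have hφsep : φ.Separable :=
    hφ ▸ Polynomial.separable_prod_X_sub_C_iff.2 (List.nodup_ofFn.1 (hdist.sublist (by simp)))
  have hψsep : ψ.Separable :=
    hψ ▸ Polynomial.separable_prod_X_sub_C_iff.2 (List.nodup_ofFn.1 (hdist.drop (i := 4)))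
  have hφdeg : φ.natDegree ≤ 4 := by simp [hφ, Lagrange.natDegree_nodal]
  have hP : Cubic.toPoly ⟨σ1 - τ1, -(σ2 - τ2), σ3 - τ3, -(σ4 - τ4)⟩ = ψ - φ := by
    simp only [hφ, hψ, hσ1, hσ2, hσ3, hσ4, hτ1, hτ2, hτ3, hτ4, Cubic.toPoly, Lagrange.nodal,
      Fin.prod_univ_four, Matrix.cons_val, map_add, map_sub, map_neg, map_mul]
    ring
  have hFf' : dehomogenize F = sqrtSumPoly φ ψ := by
    rw [dehomogenize_fin_three, hFf, hf]
    simp [sqrtSumPoly, hφ1, hφ2, hφ, hψ, Lagrange.nodal, Fin.prod_univ_four, ← algebraMap_eq]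
  have hSing' : Sing = singularLocus F :=
    Set.ext fun P ↦ (hSing P).trans (mem_singularLocus_fin_three F P).symm
  have hmain := stmt_14_general h2 h3 hφsep hψsep hφdeg hP (sub_ne_zero.2 hστ) hFhom hFf'
  rw [cubic_resultant_derivative_eq_det, cubic_derivative_resultant_derivative_eq_det] at hmain
  simp only [neg_neg, mul_neg] at hmain
  simp only [neg_mul] at hres1 hres2
  rw [hres1, hres2, hSing']
  exact hmain
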